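/- Let s₀, s₁, s₂ be natural numbers satisfying s₀ + s₁ + s₂ ≤ 4·min(s₀, s₁, s₂), and extend them to a function s : ℤ/12ℤ → ℕ by s_t = s_{t mod 3}. Then there exists a function l : ℤ/12ℤ → ℕ such that for every t ∈ ℤ/12ℤ one has s_t = l_{t−3} + l_{t−2} + l_{t−1} + l_t (indices taken modulo 12). -/

import Mathlib

/-!
A window of `n + 1` consecutive indices covers a full period of an `n`-periodic sequence `f` and
repeats one entry, so its sum is `f t + ∑ f`. The sum of an `(n + 1)`-periodic sequence `g` over
the same window is the constant `∑ g`. Hence `l = f - g` works as soon as `g ≤ f` and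
`∑ g = ∑ f`, where the sums run over one period. Since `∑ f ≤ (n + 1) * min f`, such a `g` exists,
even with all its entries bounded by `min f`.
-/

open Finset

theorem exists_le_sum_eq {ι : Type*} [Fintype ι] {f : ι → ℕ} {S : ℕ} (h : S ≤ ∑ i, f i) :
    ∃ g ≤ f, ∑ i, g i = S := by
  obtain ⟨g, hg_le, hg_sum⟩ := Finsupp.exists_le_degree_eq (Finsupp.equivFunOnFinite.symm f) S
    (by simpa [Finsupp.degree_eq_sum] using h)
  exact ⟨g, hg_le, by rw [← Finsupp.degree_eq_sum, hg_sum]⟩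

section WindowSums

variable {M : Type*} [AddCommMonoid M] {n : ℕ} [NeZero n]

theorem sum_range_sub_natCast_zmod (f : ZMod n → M) (a : ZMod n) :
    ∑ i ∈ range n, f (a - i) = ∑ x, f x := by
  refine sum_nbij' (a - ·) (fun x ↦ (a - x).val) ?_ ?_ ?_ ?_ ?_
  · simp
  · simp [ZMod.val_lt]
  · intro i hi
    simp [ZMod.val_cast_of_lt (mem_range.mp hi)]
  · simp
  · simp

theorem sum_range_succ_sub_natCast_zmod (f : ZMod n → M) (a : ZMod n) :
    ∑ i ∈ range (n + 1), f (a - i) = ∑ x, f x + f a := by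
  rw [sum_range_succ, sum_range_sub_natCast_zmod, ZMod.natCast_self, sub_zero]

end WindowSums

theorem stmt_0_general {n N : ℕ} [NeZero n] (hn : n ∣ N) (hn' : n + 1 ∣ N) (f : ZMod n → ℕ)
    (hf : ∀ x, ∑ y, f y ≤ (n + 1) * f x) :
    ∃ l : ZMod N → ℕ, ∀ t, f t.cast = ∑ i ∈ range (n + 1), l (t - i) := by
  obtain ⟨x₀, hmin⟩ := Finite.exists_min f
  obtain ⟨g, hg_le, hg_sum⟩ :=
    exists_le_sum_eq (f := fun _ : ZMod (n + 1) ↦ f x₀) (S := ∑ y, f y) (by simpa using hf x₀)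
  refine ⟨fun t ↦ f t.cast - g t.cast, fun t ↦ Eq.symm ?_⟩
  calc ∑ i ∈ range (n + 1), (f (t - i : ZMod N).cast - g (t - i : ZMod N).cast)
      = ∑ i ∈ range (n + 1), (f (t.cast - i) - g (t.cast - i)) := by
        simp only [ZMod.cast_sub hn, ZMod.cast_sub hn', ZMod.cast_natCast hn,
          ZMod.cast_natCast hn']
    _ = ∑ i ∈ range (n + 1), f (t.cast - i) - ∑ i ∈ range (n + 1), g (t.cast - i) :=
        sum_tsub_distrib _ fun _ _ ↦ (hg_le _).trans (hmin _)
    _ = (∑ y, f y + f t.cast) - ∑ y, f y := by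
        rw [sum_range_succ_sub_natCast_zmod, sum_range_sub_natCast_zmod, hg_sum]
    _ = f t.cast := add_tsub_cancel_left ..

/-- If `s₀ + s₁ + s₂ ≤ 4 · min(s₀, s₁, s₂)` and `s : ℤ/12ℤ → ℕ` is the
period-3 extension of `(s₀, s₁, s₂)`, then there is `l : ℤ/12ℤ → ℕ` with
`s t = l (t-3) + l (t-2) + l (t-1) + l t` for all `t`. -/
theorem stmt_0 (s₀ s₁ s₂ : ℕ)
    (h : s₀ + s₁ + s₂ ≤ 4 * min s₀ (min s₁ s₂))
    (s : ZMod 12 → ℕ)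
    (hs : ∀ t : ZMod 12, s t = ![s₀, s₁, s₂] ⟨t.val % 3, by omega⟩) :
    ∃ l : ZMod 12 → ℕ,
      ∀ t : ZMod 12, s t = l (t - 3) + l (t - 2) + l (t - 1) + l t := by
  have residue_eq_cast (t : ZMod 12) :
      (⟨t.val % 3, Nat.mod_lt _ three_pos⟩ : Fin 3) = (t.cast : ZMod 3) :=
    Fin.ext <| by rw [ZMod.cast_eq_val]; exact (ZMod.val_natCast 3 t.val).symm
  have sum_le (x : Fin 3) : ∑ y, ![s₀, s₁, s₂] y ≤ 4 * ![s₀, s₁, s₂] x := by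
    calc ∑ y, ![s₀, s₁, s₂] y = s₀ + s₁ + s₂ := Fin.sum_univ_three _
      _ ≤ 4 * min s₀ (min s₁ s₂) := h
      _ ≤ 4 * ![s₀, s₁, s₂] x := by gcongr; fin_cases x <;> simp
  obtain ⟨l, hl⟩ := stmt_0_general (n := 3) (N := 12) (by decide) (by decide) ![s₀, s₁, s₂] sum_le
  refine ⟨l, fun t ↦ ?_⟩
  rw [hs, residue_eq_cast, hl]
  simp [sum_range_succ', one_add_one_eq_two, two_add_one_eq_three]
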